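/- For every ε > 0 there exists a constant C_ε > 0 with the following property. Let N, h be positive integers with 1 ≤ h ≤ 2N², let r be a positive divisor of h with r ≤ N, and set m = h/r and M = N/r (a rational number). Then |Σ_{x,y} ψ(V(x,y))| ≤ C_ε · M · (N^ε + |h − N²|/(r·N)) and |Σ_{x,y} ψ(U(x,y))| ≤ C_ε · M · (N^ε + |h − N²|/(r·N)), where both sums run over pairs of coprime positive integers x, y with x ≤ M, y ≤ M and x + y > M. Here, for such a pair (x,y), b₀ = b₀(x,y) is the unique integer with 1 ≤ b₀ ≤ y and y | (b₀·x − m), d₀ = d₀(x,y) = (m − b₀·x)/y, U(x,y) = max{(1 − b₀)/y, (d₀ − N)/x}, and V(x,y) = min{(N − b₀)/y, (d₀ − 1)/x}. -/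

import Mathlib

/-- The saw-tooth function `ψ(t) = t − ⌊t⌋ − 1/2`. -/
noncomputable def psi (t : ℝ) : ℝ := t - ⌊t⌋ - 1 / 2

/-!
Put `K = ⌊N / r⌋`, so that the sums run over coprime `x, y ≤ K` with `x + y > K`. Since
`b₀ x + d₀ y = m`, the minimum defining `V` is `(N - b₀) / y` exactly when `N x + y ≤ m`. If every
`V` is replaced by `(N - b₀) / y`, then for fixed `y` the variable `x` runs over the residues
coprime to `y`, once each, hence so does `x⁻¹`, while `b₀ ≡ m x⁻¹ (mod y)`. Möbius inversion and
Hermite's identity `∑_{u mod n} ψ(t + u / n) = ψ(n t)` bound the sum over `x` by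
`½ ∑_{d ∣ y} gcd(m, d)`, and summing over `y` gives `O(d(m) K (1 + log K)) = O(K N^ε)`. Each
exceptional pair, with `N x + y > m`, costs at most `1`, and there are at most
`K (K + 1 - ⌊m / N⌋)` of them, which is `O(M (1 + |h - N²| / (r N)))`. The symmetry
`(x, y, b₀, d₀) ↦ (y, x, d₀, b₀)` exchanges `U` and `-V`.
-/

section Development

open Finset
open ArithmeticFunction (moebius)

theorem psi_eq_fract_sub_half (t : ℝ) : psi t = Int.fract t - 1 / 2 := rfl

theorem abs_psi_le_half (t : ℝ) : |psi t| ≤ 1 / 2 := by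
  rw [psi_eq_fract_sub_half, abs_le]
  constructor <;> linarith [Int.fract_nonneg t, Int.fract_lt_one t]

theorem psi_of_nonneg_of_lt_one {t : ℝ} (h₀ : 0 ≤ t) (h₁ : t < 1) : psi t = t - 1 / 2 := by
  rw [psi_eq_fract_sub_half, Int.fract_eq_self.mpr ⟨h₀, h₁⟩]

theorem psi_add_intCast (t : ℝ) (k : ℤ) : psi (t + k) = psi t := by
  simp only [psi_eq_fract_sub_half, Int.fract_add_intCast]

theorem abs_psi_sub_psi_le_one (s t : ℝ) : |psi s - psi t| ≤ 1 := by
  calc |psi s - psi t| ≤ |psi s| + |psi t| := abs_sub _ _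
    _ ≤ 1 := by linarith [abs_psi_le_half s, abs_psi_le_half t]

/-- The function `u ↦ ψ(t + u / n)` on residue classes modulo `n`, evaluated at the
representative of `u` in `[0, n)`. -/
noncomputable def psiResidue (n : ℕ) (t : ℝ) (u : ZMod n) : ℝ := psi (t + (u.val : ℝ) / n)

theorem psi_add_intCast_div (n : ℕ) [NeZero n] (t : ℝ) (a : ℤ) :
    psi (t + (a : ℝ) / n) = psiResidue n t a := by
  have hn : (n : ℝ) ≠ 0 := NeZero.ne _
  have hval : (((a : ZMod n).val : ℤ) : ℝ) = ((a % n : ℤ) : ℝ) := by rw [ZMod.val_intCast]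
  have ha : (a : ℝ) = ((a % n : ℤ) : ℝ) + n * ((a / n : ℤ) : ℝ) := by
    exact_mod_cast (Int.emod_add_mul_ediv a n).symm
  calc psi (t + (a : ℝ) / n)
      = psi (t + ((a % n : ℤ) : ℝ) / n + ((a / n : ℤ) : ℝ)) := by
        congr 1
        rw [ha]
        field_simp
        ring
    _ = psiResidue n t a := by
        rw [psi_add_intCast, psiResidue, ← hval, Int.cast_natCast]

theorem sum_Ico_zmod {R : Type*} [AddCommMonoid R] (n : ℕ) [NeZero n] (k : ℕ) (G : ZMod n → R) :
    ∑ x ∈ Ico k (k + n), G x = ∑ u, G u := by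
  have hinj : Set.InjOn (fun x : ℕ ↦ (x : ZMod n)) (Ico k (k + n)) := by
    intro a ha b hb hab
    rw [coe_Ico, Set.mem_Ico] at ha hb
    have hdvd := (ZMod.natCast_eq_natCast_iff a b n).mp hab |>.dvd
    have := Int.eq_zero_of_abs_lt_dvd hdvd (by rw [abs_lt]; omega)
    omega
  have himage : (Ico k (k + n)).image (fun x : ℕ ↦ (x : ZMod n)) = univ := by
    apply eq_univ_of_card
    rw [card_image_of_injOn hinj, ZMod.card, Nat.card_Ico, Nat.add_sub_cancel_left]
  rw [← himage, sum_image hinj]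

theorem sum_range_zmod {R : Type*} [AddCommMonoid R] (n : ℕ) [NeZero n] (G : ZMod n → R) :
    ∑ k ∈ range n, G k = ∑ u, G u := by
  simpa only [zero_add, Nat.Ico_zero_eq_range] using sum_Ico_zmod n 0 G

theorem sum_Ico_coprime_zmod {R : Type*} [AddCommMonoid R] (n : ℕ) [NeZero n] (k : ℕ)
    (G : ZMod n → R) :
    ∑ x ∈ Ico k (k + n) with x.Coprime n, G x = ∑ v : (ZMod n)ˣ, G v := by
  classical
  calc ∑ x ∈ Ico k (k + n) with x.Coprime n, G x
      = ∑ x ∈ Ico k (k + n), if IsUnit (x : ZMod n) then G x else 0 := by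
        simp only [sum_filter, ZMod.isUnit_iff_coprime]
    _ = ∑ u : ZMod n with IsUnit u, G u := by
        rw [sum_Ico_zmod n k (fun u ↦ if IsUnit u then G u else 0), sum_filter]
    _ = ∑ v : (ZMod n)ˣ, G v := by
        symm
        refine sum_nbij (fun v ↦ (v : ZMod n)) (fun v _ ↦ ?_) (fun _ _ _ _ ↦ Units.ext)
          (fun u hu ↦ ?_) (fun _ _ ↦ rfl)
        · exact mem_filter.mpr ⟨mem_univ _, v.isUnit⟩
        · exact ⟨(mem_filter.mp hu).2.unit, mem_coe.mpr (mem_univ _), rfl⟩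

theorem sum_psiResidue_eq_psi_mul (n : ℕ) [NeZero n] (t : ℝ) :
    ∑ u, psiResidue n t u = psi (n * t) := by
  have hn : (0 : ℝ) < n := Nat.cast_pos.mpr (NeZero.pos n)
  set s : ℝ := Int.fract (n * t) / n with hs
  have ht : t = s + (⌊n * t⌋ : ℝ) / n := by
    rw [hs, ← add_div, Int.fract_add_floor]
    field_simp
  have hshift (u : ZMod n) : psiResidue n t u = psiResidue n s (u + ⌊n * t⌋) := by
    have hcast : u + ⌊n * t⌋ = ((u.val + ⌊n * t⌋ : ℤ) : ZMod n) := by simp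
    rw [hcast, ← psi_add_intCast_div, psiResidue]
    congr 1
    push_cast
    linear_combination ht
  have hterm (k : ℕ) (hk : k ∈ range n) : psiResidue n s k = s - 1 / 2 + (k : ℝ) / n := by
    have hk' : (k : ℝ) + 1 ≤ n := by exact_mod_cast mem_range.mp hk
    have hlt : s + (k : ℝ) / n < 1 := by
      rw [hs, ← add_div, div_lt_one hn]
      linarith [Int.fract_lt_one (n * t)]
    rw [psiResidue, ZMod.val_natCast_of_lt (mem_range.mp hk), psi_of_nonneg_of_lt_one _ hlt]
    · ring
    · have := Int.fract_nonneg (n * t)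
      positivity
  have hgauss : ∑ k ∈ range n, (k : ℝ) = n * (n - 1) / 2 := by
    have h := congrArg (Nat.cast : ℕ → ℝ) (sum_range_id_mul_two n)
    push_cast [Nat.cast_pred (NeZero.pos n)] at h
    linarith
  calc ∑ u, psiResidue n t u
      = ∑ u, psiResidue n s u := by
        simp only [hshift]
        exact Equiv.sum_comp (Equiv.addRight (⌊n * t⌋ : ZMod n)) (psiResidue n s)
    _ = ∑ k ∈ range n, (s - 1 / 2 + (k : ℝ) / n) := by
        rw [← sum_range_zmod, sum_congr rfl hterm]
    _ = psi (n * t) := by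
        rw [sum_add_distrib, ← sum_div, hgauss, sum_const, card_range, nsmul_eq_mul,
          psi_eq_fract_sub_half, hs]
        field_simp
        ring

theorem sum_range_psi_of_isCoprime (n : ℕ) [NeZero n] {B : ℤ} (hB : IsCoprime B n) (t : ℝ) :
    ∑ k ∈ range n, psi (t + (B : ℝ) * k / n) = psi (n * t) := by
  obtain ⟨w, hw⟩ : IsUnit (B : ZMod n) := (ZMod.coe_int_isUnit_iff_isCoprime B n).mpr hB.symm
  have hterm (k : ℕ) : psi (t + (B : ℝ) * k / n) = psiResidue n t (B * k) := by
    exact_mod_cast psi_add_intCast_div n t (B * k)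
  calc ∑ k ∈ range n, psi (t + (B : ℝ) * k / n)
      = ∑ u : ZMod n, psiResidue n t (B * u) := by
        simp only [hterm, ← sum_range_zmod n fun u ↦ psiResidue n t (B * u)]
    _ = ∑ u, psiResidue n t u := by
        rw [← hw]
        exact Equiv.sum_comp (Units.mulLeft w) (psiResidue n t)
    _ = psi (n * t) := sum_psiResidue_eq_psi_mul n t

theorem sum_range_mul_of_periodic {R : Type*} [AddCommMonoid R] {f : ℕ → R} {n : ℕ}
    (hf : Function.Periodic f n) (g : ℕ) :
    ∑ k ∈ range (g * n), f k = g • ∑ k ∈ range n, f k := by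
  induction g with
  | zero => simp
  | succ g ih =>
    have hshift (k : ℕ) : f (g * n + k) = f k := by
      rw [add_comm]
      exact hf.nat_mul g k
    rw [Nat.succ_mul, sum_range_add, ih, succ_nsmul]
    simp only [hshift]

theorem abs_sum_range_psi_linear_le (n : ℕ) [NeZero n] (B : ℤ) (t : ℝ) :
    |∑ k ∈ range n, psi (t + (B : ℝ) * k / n)| ≤ 1 / 2 * (Int.gcd B n : ℝ) := by
  have hg : 0 < Int.gcd B n := Int.gcd_pos_of_ne_zero_right _ (NeZero.ne _)
  obtain ⟨B', n', hcop, hB', hn'⟩ := Int.exists_gcd_one hg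
  set g := Int.gcd B n
  lift n' to ℕ using by
    refine (pos_of_mul_pos_left (b := (g : ℤ)) ?_ (by positivity)).le
    rw [← hn']
    exact_mod_cast NeZero.pos n
  have hnat : n = g * n' := by
    rw [mul_comm]
    exact_mod_cast hn'
  have : NeZero n' := ⟨fun h ↦ NeZero.ne n (by rw [hnat, h, mul_zero])⟩
  have hg₀ : (g : ℝ) ≠ 0 := by positivity
  have hn₀ : (n' : ℝ) ≠ 0 := NeZero.ne _
  have hterm (k : ℕ) : psi (t + (B : ℝ) * k / n) = psi (t + (B' : ℝ) * k / n') := by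
    congr 2
    rw [hB', hnat]
    push_cast
    field_simp
  have hperiodic : Function.Periodic (fun k : ℕ ↦ psi (t + (B' : ℝ) * k / n')) n' := by
    intro k
    simp only [Nat.cast_add]
    rw [← psi_add_intCast (t + (B' : ℝ) * k / n') B']
    congr 1
    field_simp
    ring
  have hsum : ∑ k ∈ range n, psi (t + (B : ℝ) * k / n) = g * psi (n' * t) := by
    simp only [hterm]
    rw [hnat, sum_range_mul_of_periodic hperiodic,
      sum_range_psi_of_isCoprime n' (Int.isCoprime_iff_gcd_eq_one.mpr hcop), nsmul_eq_mul]
  rw [hsum, abs_mul, Nat.abs_cast, mul_comm]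
  gcongr
  exact abs_psi_le_half _

theorem sum_range_filter_dvd {R : Type*} [AddCommMonoid R] {n e : ℕ} (he₀ : e ≠ 0) (he : e ∣ n)
    (f : ℕ → R) : ∑ a ∈ range n with e ∣ a, f a = ∑ k ∈ range (n / e), f (e * k) := by
  have hpos := Nat.pos_of_ne_zero he₀
  symm
  refine sum_nbij (e * ·) (fun k hk ↦ ?_) (fun a _ b _ ↦ Nat.eq_of_mul_eq_mul_left hpos) ?_
    (fun _ _ ↦ rfl)
  · rw [mem_filter, mem_range, ← Nat.lt_div_iff_mul_lt' he]
    exact ⟨mem_range.mp hk, dvd_mul_right e k⟩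
  · intro a ha
    obtain ⟨hlt, k, rfl⟩ := mem_filter.mp ha
    exact ⟨k, mem_coe.mpr (mem_range.mpr ((Nat.lt_div_iff_mul_lt' he k).mpr (mem_range.mp hlt))),
      rfl⟩

theorem sum_divisors_moebius (R : Type*) [Ring R] (k : ℕ) :
    ∑ e ∈ k.divisors, (moebius e : R) = if k = 1 then 1 else 0 := by
  have h := congrArg (fun f : ArithmeticFunction R ↦ f k)
    ArithmeticFunction.coe_moebius_mul_coe_zeta
  simpa only [ArithmeticFunction.coe_mul_zeta_apply, ArithmeticFunction.one_apply,
    ArithmeticFunction.intCoe_apply] using h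

theorem sum_range_coprime_eq_sum_moebius {R : Type*} [Ring R] {n : ℕ} (hn : n ≠ 0) (f : ℕ → R) :
    ∑ a ∈ range n with a.Coprime n, f a =
      ∑ e ∈ n.divisors, (moebius e : R) * ∑ k ∈ range (n / e), f (e * k) := by
  have hdivisors (a : ℕ) : {e ∈ n.divisors | e ∣ a} = (a.gcd n).divisors := by
    ext e
    simp only [mem_filter, Nat.mem_divisors, Nat.dvd_gcd_iff, ne_eq, Nat.gcd_eq_zero_iff, hn]
    tauto
  have hindicator (a : ℕ) : (if a.Coprime n then f a else 0) =
      ∑ e ∈ n.divisors, if e ∣ a then (moebius e : R) * f a else 0 := by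
    rw [← sum_filter, hdivisors, ← sum_mul, sum_divisors_moebius, ite_mul, one_mul, zero_mul]
  calc ∑ a ∈ range n with a.Coprime n, f a
      = ∑ e ∈ n.divisors, ∑ a ∈ range n with e ∣ a, (moebius e : R) * f a := by
        simp only [sum_filter, hindicator]
        exact sum_comm
    _ = ∑ e ∈ n.divisors, (moebius e : R) * ∑ k ∈ range (n / e), f (e * k) := by
        refine sum_congr rfl fun e he ↦ ?_
        rw [← mul_sum, sum_range_filter_dvd (Nat.pos_of_mem_divisors he).ne'
          (Nat.dvd_of_mem_divisors he)]

theorem abs_sum_units_psiResidue_le (n : ℕ) [NeZero n] (t : ℝ) (B : ℤ) :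
    |∑ v : (ZMod n)ˣ, psiResidue n t (B * v)| ≤ 1 / 2 * ∑ d ∈ n.divisors, (Int.gcd B d : ℝ) := by
  have hterm (a : ℕ) : psiResidue n t (B * a) = psi (t + (B : ℝ) * a / n) := by
    exact_mod_cast (psi_add_intCast_div n t (B * a)).symm
  have hinner (e : ℕ) (he : e ∈ n.divisors) :
      |(moebius e : ℝ) * ∑ k ∈ range (n / e), psi (t + (B : ℝ) * (e * k : ℕ) / n)| ≤
        1 / 2 * (Int.gcd B (n / e : ℕ) : ℝ) := by
    have hdvd := Nat.dvd_of_mem_divisors he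
    have hpos := Nat.pos_of_mem_divisors he
    have : NeZero (n / e) := ⟨(Nat.div_pos (Nat.divisor_le he) hpos).ne'⟩
    have hreduce (k : ℕ) : (B : ℝ) * (e * k : ℕ) / n = B * k / (n / e : ℕ) := by
      have he₀ : (e : ℝ) ≠ 0 := by positivity
      have hn₀ : (n : ℝ) ≠ 0 := NeZero.ne _
      rw [Nat.cast_div hdvd he₀]
      push_cast
      field_simp
    have hmoebius : |(moebius e : ℝ)| ≤ 1 := by
      exact_mod_cast ArithmeticFunction.abs_moebius_le_one (n := e)
    simp only [hreduce]
    rw [abs_mul]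
    exact (mul_le_of_le_one_left (abs_nonneg _) hmoebius).trans
      (abs_sum_range_psi_linear_le (n / e) B t)
  calc |∑ v : (ZMod n)ˣ, psiResidue n t (B * v)|
      = |∑ a ∈ range n with a.Coprime n, psi (t + (B : ℝ) * a / n)| := by
        have h := sum_Ico_coprime_zmod n 0 fun u ↦ psiResidue n t (B * u)
        rw [zero_add, Nat.Ico_zero_eq_range] at h
        simp only [← h, hterm]
    _ ≤ ∑ e ∈ n.divisors, 1 / 2 * (Int.gcd B (n / e : ℕ) : ℝ) := by
        rw [sum_range_coprime_eq_sum_moebius (NeZero.ne n)]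
        exact (abs_sum_le_sum_abs _ _).trans (sum_le_sum hinner)
    _ = 1 / 2 * ∑ d ∈ n.divisors, (Int.gcd B d : ℝ) := by
        rw [← mul_sum, Nat.sum_div_divisors n fun d ↦ (Int.gcd B d : ℝ)]

theorem abs_sum_Ico_coprime_psi_le (n : ℕ) [NeZero n] (k : ℕ) (t : ℝ) (B m : ℤ) (c : ℕ → ℤ)
    (hc : ∀ x ∈ Ico k (k + n), x.Coprime n → c x * x ≡ m [ZMOD n]) :
    |∑ x ∈ Ico k (k + n) with x.Coprime n, psi (t + (B : ℝ) * c x / n)| ≤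
      1 / 2 * ∑ d ∈ n.divisors, (Int.gcd (B * m) d : ℝ) := by
  have hterm (x : ℕ) (hx : x ∈ {x ∈ Ico k (k + n) | x.Coprime n}) :
      psi (t + (B : ℝ) * c x / n) = psiResidue n t ((B * m : ℤ) * (x : ZMod n)⁻¹) := by
    obtain ⟨hx, hcop⟩ := mem_filter.mp hx
    have hcx : (c x : ZMod n) = m * (x : ZMod n)⁻¹ := by
      have h := (ZMod.intCast_eq_intCast_iff _ _ n).mpr (hc x hx hcop)
      push_cast at h
      rw [← h, mul_assoc, ZMod.coe_mul_inv_eq_one x hcop, mul_one]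
    have h := psi_add_intCast_div n t (B * c x)
    push_cast at h ⊢
    rw [h, hcx, mul_assoc]
  have hinv : ∑ v : (ZMod n)ˣ, psiResidue n t ((B * m : ℤ) * (v : ZMod n)⁻¹) =
      ∑ v : (ZMod n)ˣ, psiResidue n t ((B * m : ℤ) * v) := by
    simp only [ZMod.inv_coe_unit]
    exact Equiv.sum_comp (Equiv.inv (ZMod n)ˣ) fun v ↦ psiResidue n t ((B * m : ℤ) * v)
  rw [sum_congr rfl hterm,
    sum_Ico_coprime_zmod n k fun u ↦ psiResidue n t ((B * m : ℤ) * u⁻¹), hinv]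
  exact abs_sum_units_psiResidue_le n t (B * m)

theorem sum_divisors_eq_sum_card_mul (K : ℕ) (f : ℕ → ℝ) :
    ∑ y ∈ Icc 1 K, ∑ n ∈ y.divisors, f n = ∑ n ∈ Icc 1 K, ((K / n : ℕ) : ℝ) * f n := by
  have hswap : ∑ y ∈ Icc 1 K, ∑ n ∈ y.divisors, f n =
      ∑ n ∈ Icc 1 K, ∑ y ∈ Icc 1 K with n ∣ y, f n := by
    refine sum_comm' fun y n ↦ ?_
    simp only [mem_Icc, mem_filter, Nat.mem_divisors]
    constructor
    · rintro ⟨⟨hy, hyK⟩, hdvd, -⟩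
      exact ⟨⟨⟨hy, hyK⟩, hdvd⟩, Nat.pos_of_dvd_of_pos hdvd hy, (Nat.le_of_dvd hy hdvd).trans hyK⟩
    · rintro ⟨⟨⟨hy, hyK⟩, hdvd⟩, -⟩
      exact ⟨⟨hy, hyK⟩, hdvd, Nat.ne_of_gt hy⟩
  have hcard (n : ℕ) : #{y ∈ Icc 1 K | n ∣ y} = K / n := Nat.Ioc_filter_dvd_card_eq_div K n
  simp only [hswap, sum_const, hcard, nsmul_eq_mul]

theorem sum_multiples_div_le (K g : ℕ) :
    ∑ n ∈ Icc 1 K with g ∣ n, (g : ℝ) / n ≤ 1 + Real.log K := by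
  rcases eq_or_ne g 0 with rfl | hg
  · simp only [Nat.cast_zero, zero_div, sum_const_zero]
    linarith [Real.log_natCast_nonneg K]
  have hsub : {n ∈ Icc 1 K | g ∣ n} ⊆ (Icc 1 K).image (g * ·) := by
    intro n hn
    obtain ⟨hn, q, rfl⟩ := mem_filter.mp hn
    obtain ⟨hpos, hle⟩ := mem_Icc.mp hn
    exact mem_image_of_mem _ (mem_Icc.mpr
      ⟨Nat.pos_of_mul_pos_left hpos, (Nat.le_mul_of_pos_left q (Nat.pos_of_ne_zero hg)).trans hle⟩)
  calc ∑ n ∈ Icc 1 K with g ∣ n, (g : ℝ) / n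
      ≤ ∑ n ∈ (Icc 1 K).image (g * ·), (g : ℝ) / n :=
        sum_le_sum_of_subset_of_nonneg hsub fun _ _ _ ↦ by positivity
    _ = ∑ q ∈ Icc 1 K, (q : ℝ)⁻¹ := by
        rw [sum_image fun _ _ _ _ ↦ Nat.eq_of_mul_eq_mul_left (Nat.pos_of_ne_zero hg)]
        refine sum_congr rfl fun q _ ↦ ?_
        have hg' : (g : ℝ) ≠ 0 := Nat.cast_ne_zero.mpr hg
        push_cast
        rw [div_mul_cancel_left₀ hg']
    _ ≤ 1 + Real.log K := by
        have h := harmonic_le_one_add_log K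
        rw [harmonic_eq_sum_Icc] at h
        push_cast at h
        exact h

theorem sum_gcd_div_le {m : ℕ} (hm : m ≠ 0) (K : ℕ) :
    ∑ n ∈ Icc 1 K, (m.gcd n : ℝ) / n ≤ #m.divisors * (1 + Real.log K) := by
  have hgcd (n : ℕ) : (m.gcd n : ℝ) / n ≤ ∑ g ∈ m.divisors with g ∣ n, (g : ℝ) / n :=
    single_le_sum (f := fun g : ℕ ↦ (g : ℝ) / n) (fun _ _ ↦ by positivity)
      (mem_filter.mpr ⟨Nat.mem_divisors.mpr ⟨Nat.gcd_dvd_left m n, hm⟩, Nat.gcd_dvd_right m n⟩)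
  calc ∑ n ∈ Icc 1 K, (m.gcd n : ℝ) / n
      ≤ ∑ n ∈ Icc 1 K, ∑ g ∈ m.divisors with g ∣ n, (g : ℝ) / n := sum_le_sum fun n _ ↦ hgcd n
    _ = ∑ g ∈ m.divisors, ∑ n ∈ Icc 1 K with g ∣ n, (g : ℝ) / n := by
        simp only [sum_filter]
        exact sum_comm
    _ ≤ #m.divisors * (1 + Real.log K) := by
        rw [← nsmul_eq_mul]
        exact sum_le_card_nsmul _ _ _ fun g _ ↦ sum_multiples_div_le K g

theorem sum_sum_divisors_gcd_le {m : ℕ} (hm : m ≠ 0) (K : ℕ) :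
    ∑ y ∈ Icc 1 K, ∑ n ∈ y.divisors, (m.gcd n : ℝ) ≤ #m.divisors * (K * (1 + Real.log K)) := by
  calc ∑ y ∈ Icc 1 K, ∑ n ∈ y.divisors, (m.gcd n : ℝ)
      = ∑ n ∈ Icc 1 K, ((K / n : ℕ) : ℝ) * m.gcd n :=
        sum_divisors_eq_sum_card_mul K fun n ↦ (m.gcd n : ℝ)
    _ ≤ ∑ n ∈ Icc 1 K, (K : ℝ) / n * m.gcd n := by
        gcongr
        exact Nat.cast_div_le
    _ = K * ∑ n ∈ Icc 1 K, (m.gcd n : ℝ) / n := by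
        rw [mul_sum]
        exact sum_congr rfl fun n _ ↦ by ring
    _ ≤ K * (#m.divisors * (1 + Real.log K)) := by
        gcongr
        exact sum_gcd_div_le hm K
    _ = #m.divisors * (K * (1 + Real.log K)) := by ring

theorem natCast_add_one_le_mul_exp {c : ℝ} (hc : 0 < c) (a : ℕ) :
    (a : ℝ) + 1 ≤ (1 + 1 / c) * Real.exp (a * c) := by
  have hexpand : (1 + 1 / c) * (a * c + 1) = a + 1 + (a * c + 1 / c) := by
    field_simp
    ring
  have hnonneg : 0 ≤ a * c + 1 / c := by positivity
  calc (a : ℝ) + 1 ≤ (1 + 1 / c) * (a * c + 1) := by linarith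
    _ ≤ (1 + 1 / c) * Real.exp (a * c) := by
        gcongr
        exact Real.add_one_le_exp _

theorem add_one_le_mul_pow_rpow {δ : ℝ} (hδ : 0 < δ) {p : ℕ} (hp : 2 ≤ p) (a : ℕ) :
    (a : ℝ) + 1 ≤ (1 + 1 / (δ * Real.log 2)) * ((p : ℝ) ^ a) ^ δ := by
  have hp' : (2 : ℝ) ≤ p := by exact_mod_cast hp
  calc (a : ℝ) + 1 ≤ (1 + 1 / (δ * Real.log 2)) * Real.exp (a * (δ * Real.log 2)) :=
        natCast_add_one_le_mul_exp (by positivity) a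
    _ = (1 + 1 / (δ * Real.log 2)) * ((2 : ℝ) ^ a) ^ δ := by
        rw [Real.rpow_def_of_pos (by positivity), Real.log_pow]
        ring_nf
    _ ≤ (1 + 1 / (δ * Real.log 2)) * ((p : ℝ) ^ a) ^ δ := by gcongr

theorem add_one_le_pow_rpow_of_two_le_rpow {δ : ℝ} {p : ℕ} (hp : 2 ≤ (p : ℝ) ^ δ) (a : ℕ) :
    (a : ℝ) + 1 ≤ ((p : ℝ) ^ a) ^ δ := by
  calc (a : ℝ) + 1 ≤ 2 ^ a := by exact_mod_cast Nat.lt_two_pow_self (n := a)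
    _ ≤ ((p : ℝ) ^ δ) ^ a := by gcongr
    _ = ((p : ℝ) ^ a) ^ δ := Real.rpow_pow_comm (Nat.cast_nonneg p) δ a

theorem natCast_rpow_eq_prod_primeFactors {n : ℕ} (hn : n ≠ 0) (δ : ℝ) :
    (n : ℝ) ^ δ = ∏ p ∈ n.primeFactors, ((p : ℝ) ^ n.factorization p) ^ δ := by
  rw [Real.finsetProd_rpow _ _ fun p _ ↦ by positivity]
  congr 1
  exact_mod_cast (Nat.prod_factorization_pow_eq_self hn).symm

theorem exists_card_divisors_le_mul_rpow {δ : ℝ} (hδ : 0 < δ) :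
    ∃ C : ℝ, 0 < C ∧ ∀ n : ℕ, (#n.divisors : ℝ) ≤ C * (n : ℝ) ^ δ := by
  set B : ℝ := 1 + 1 / (δ * Real.log 2)
  have hB : 1 ≤ B := le_add_of_nonneg_right (by positivity)
  set P : ℕ := ⌈(2 : ℝ) ^ δ⁻¹⌉₊
  refine ⟨B ^ P, by positivity, fun n ↦ ?_⟩
  rcases eq_or_ne n 0 with rfl | hn
  · simp only [Nat.divisors_zero, card_empty, Nat.cast_zero]
    positivity
  have hfactor (p : ℕ) (hp : p ∈ n.primeFactors) : (n.factorization p : ℝ) + 1 ≤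
      (if p < P then B else 1) * ((p : ℝ) ^ n.factorization p) ^ δ := by
    split_ifs with hpP
    · exact add_one_le_mul_pow_rpow hδ (Nat.prime_of_mem_primeFactors hp).two_le _
    · rw [one_mul]
      apply add_one_le_pow_rpow_of_two_le_rpow
      rw [← Real.rpow_inv_le_iff_of_pos zero_le_two (Nat.cast_nonneg p) hδ]
      exact (Nat.le_ceil _).trans (by exact_mod_cast not_lt.mp hpP)
  have hsmall : ∏ p ∈ n.primeFactors, (if p < P then B else 1) ≤ B ^ P := by
    rw [prod_ite, prod_const, prod_const_one, mul_one]
    refine pow_le_pow_right₀ hB ?_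
    calc #{p ∈ n.primeFactors | p < P} ≤ #(range P) :=
          card_le_card fun p hp ↦ mem_range.mpr (mem_filter.mp hp).2
      _ = P := card_range P
  calc (#n.divisors : ℝ) = ∏ p ∈ n.primeFactors, ((n.factorization p : ℝ) + 1) := by
        rw [Nat.card_divisors hn]
        push_cast
        rfl
    _ ≤ ∏ p ∈ n.primeFactors,
          (if p < P then B else 1) * ((p : ℝ) ^ n.factorization p) ^ δ :=
        prod_le_prod (fun _ _ ↦ by positivity) hfactor
    _ = (∏ p ∈ n.primeFactors, if p < P then B else 1) * (n : ℝ) ^ δ := by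
        rw [prod_mul_distrib, natCast_rpow_eq_prod_primeFactors hn]
    _ ≤ B ^ P * (n : ℝ) ^ δ := by gcongr

theorem exists_card_divisors_mul_one_add_log_le {ε : ℝ} (hε : 0 < ε) :
    ∃ C : ℝ, 0 < C ∧ ∀ N m : ℕ, 0 < N → m ≤ 2 * N ^ 2 →
      (#m.divisors : ℝ) * (1 + Real.log N) ≤ C * (N : ℝ) ^ ε := by
  obtain ⟨C, hC, hdivisors⟩ := exists_card_divisors_le_mul_rpow (δ := ε / 4) (by positivity)
  refine ⟨C * 2 ^ (ε / 4) * (1 + 2 / ε), by positivity, fun N m hN hm ↦ ?_⟩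
  have hN₁ : (1 : ℝ) ≤ N := by exact_mod_cast hN
  have hN₀ : (0 : ℝ) ≤ N := Nat.cast_nonneg N
  have hcard : (#m.divisors : ℝ) ≤ C * 2 ^ (ε / 4) * (N : ℝ) ^ (ε / 2) := by
    calc (#m.divisors : ℝ) ≤ C * (m : ℝ) ^ (ε / 4) := hdivisors m
      _ ≤ C * (2 * (N : ℝ) ^ 2) ^ (ε / 4) := by
          gcongr
          exact_mod_cast hm
      _ = C * 2 ^ (ε / 4) * (N : ℝ) ^ (ε / 2) := by
          rw [Real.mul_rpow zero_le_two (by positivity), ← Real.rpow_natCast_mul hN₀, ← mul_assoc]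
          ring_nf
  have hlog : 1 + Real.log N ≤ (1 + 2 / ε) * (N : ℝ) ^ (ε / 2) := by
    have hle : Real.log N ≤ (N : ℝ) ^ (ε / 2) / (ε / 2) :=
      Real.log_le_rpow_div hN₀ (by positivity)
    have hone : 1 ≤ (N : ℝ) ^ (ε / 2) := Real.one_le_rpow hN₁ (by positivity)
    calc 1 + Real.log N ≤ (N : ℝ) ^ (ε / 2) + (N : ℝ) ^ (ε / 2) / (ε / 2) := by gcongr
      _ = (1 + 2 / ε) * (N : ℝ) ^ (ε / 2) := by
          field_simp
  calc (#m.divisors : ℝ) * (1 + Real.log N)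
      ≤ (C * 2 ^ (ε / 4) * (N : ℝ) ^ (ε / 2)) * ((1 + 2 / ε) * (N : ℝ) ^ (ε / 2)) := by
        have := Real.log_natCast_nonneg N
        gcongr
    _ = C * 2 ^ (ε / 4) * (1 + 2 / ε) * ((N : ℝ) ^ (ε / 2) * (N : ℝ) ^ (ε / 2)) := by ring
    _ = C * 2 ^ (ε / 4) * (1 + 2 / ε) * (N : ℝ) ^ ε := by
        rw [← Real.rpow_add (by positivity), add_halves]


/-- The pairs of coprime positive integers `x, y ≤ K` with `x + y > K`, that is, the pairs of
denominators of consecutive Farey fractions of order `K`. -/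
def fareyPairs (K : ℕ) : Finset (ℕ × ℕ) :=
  {p ∈ Icc 1 K ×ˢ Icc 1 K | K < p.1 + p.2 ∧ p.1.Coprime p.2}

theorem mem_fareyPairs {K : ℕ} {p : ℕ × ℕ} : p ∈ fareyPairs K ↔
    (p.1 ∈ Icc 1 K ∧ p.2 ∈ Icc 1 K) ∧ K < p.1 + p.2 ∧ p.1.Coprime p.2 := by
  rw [fareyPairs, mem_filter, mem_product]

theorem swap_mem_fareyPairs {K : ℕ} {p : ℕ × ℕ} : p.swap ∈ fareyPairs K ↔ p ∈ fareyPairs K := by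
  simp only [mem_fareyPairs, Prod.fst_swap, Prod.snd_swap, add_comm p.2, Nat.coprime_comm,
    and_comm (a := p.2 ∈ Icc 1 K)]

theorem sum_fareyPairs_swap {R : Type*} [AddCommMonoid R] (K : ℕ) (F : ℕ → ℕ → R) :
    ∑ p ∈ fareyPairs K, F p.2 p.1 = ∑ p ∈ fareyPairs K, F p.1 p.2 :=
  sum_equiv (Equiv.prodComm ℕ ℕ) (fun _ ↦ swap_mem_fareyPairs.symm) fun _ _ ↦ rfl

theorem sum_fareyPairs_eq {R : Type*} [AddCommMonoid R] (K : ℕ) (F : ℕ → ℕ → R) :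
    ∑ p ∈ fareyPairs K, F p.1 p.2 =
      ∑ y ∈ Icc 1 K, ∑ x ∈ Ico (K + 1 - y) (K + 1 - y + y) with x.Coprime y, F x y := by
  refine sum_finset_product_right' _ _ _ fun p ↦ ?_
  simp only [mem_fareyPairs, mem_filter, mem_Icc, mem_Ico]
  constructor
  · rintro ⟨⟨hx, hy⟩, hK, hcop⟩
    exact ⟨hy, by omega, hcop⟩
  · rintro ⟨hy, hx, hcop⟩
    exact ⟨⟨by omega, hy⟩, by omega, hcop⟩

theorem abs_sum_fareyPairs_psi_linear_le (K : ℕ) {m : ℕ} (hm : m ≠ 0) (σ : ℤˣ) (a : ℕ → ℝ)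
    (b : ℕ → ℕ → ℤ) (hb : ∀ p ∈ fareyPairs K, b p.1 p.2 * p.1 ≡ m [ZMOD p.2]) :
    |∑ p ∈ fareyPairs K, psi (a p.2 + ((σ : ℤ) : ℝ) * b p.1 p.2 / p.2)| ≤
      #m.divisors * (K * (1 + Real.log K)) := by
  have hgcd (d : ℕ) : Int.gcd (σ * m) d = m.gcd d := by
    rw [Int.gcd_eq_natAbs_gcd_natAbs, Int.natAbs_mul, Int.units_natAbs, one_mul,
      Int.natAbs_natCast, Int.natAbs_natCast]
  have hinner (y : ℕ) (hy : y ∈ Icc 1 K) :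
      |∑ x ∈ Ico (K + 1 - y) (K + 1 - y + y) with x.Coprime y,
        psi (a y + ((σ : ℤ) : ℝ) * b x y / y)| ≤ ∑ d ∈ y.divisors, (m.gcd d : ℝ) := by
    rw [mem_Icc] at hy
    have : NeZero y := ⟨by omega⟩
    have h := abs_sum_Ico_coprime_psi_le y (K + 1 - y) (a y) σ m (b · y) fun x hx hcop ↦ by
      rw [mem_Ico] at hx
      refine hb (x, y) (mem_fareyPairs.mpr ⟨⟨?_, mem_Icc.mpr hy⟩, ?_, hcop⟩)
      · exact mem_Icc.mpr (by omega)
      · simp only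
        omega
    simp only [hgcd] at h
    refine h.trans (mul_le_of_le_one_left ?_ (by norm_num))
    positivity
  rw [sum_fareyPairs_eq K fun x y ↦ psi (a y + ((σ : ℤ) : ℝ) * b x y / y)]
  calc _ ≤ ∑ y ∈ Icc 1 K, ∑ d ∈ y.divisors, (m.gcd d : ℝ) :=
        (abs_sum_le_sum_abs _ _).trans (sum_le_sum hinner)
    _ ≤ #m.divisors * (K * (1 + Real.log K)) := sum_sum_divisors_gcd_le hm K

theorem card_filter_fareyPairs_le {N K : ℕ} (hKN : K ≤ N) (m : ℕ) :
    #{p ∈ fareyPairs K | m < N * p.1 + p.2} ≤ K * (K + 1 - m / N) := by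
  have hsub : {p ∈ fareyPairs K | m < N * p.1 + p.2} ⊆ Icc (m / N) K ×ˢ Icc 1 K := by
    intro p hp
    obtain ⟨hp, hlt⟩ := mem_filter.mp hp
    obtain ⟨⟨hx, hy⟩, -⟩ := mem_fareyPairs.mp hp
    have hN : p.2 ≤ N := (mem_Icc.mp hy).2.trans hKN
    have hquot : m / N ≤ p.1 := by
      refine Nat.lt_succ_iff.mp (Nat.div_lt_of_lt_mul ?_)
      rw [Nat.mul_succ]
      omega
    exact mem_product.mpr ⟨mem_Icc.mpr ⟨hquot, (mem_Icc.mp hx).2⟩, hy⟩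
  calc #{p ∈ fareyPairs K | m < N * p.1 + p.2} ≤ #(Icc (m / N) K ×ˢ Icc 1 K) := card_le_card hsub
    _ = K * (K + 1 - m / N) := by
        rw [card_product, Nat.card_Icc, Nat.card_Icc, Nat.add_sub_cancel, mul_comm]

theorem min_div_eq_left {N m x y : ℕ} {b d : ℤ} (hx : 0 < x) (hy : 0 < y)
    (hbd : b * x + d * y = m) (hle : N * x + y ≤ m) :
    min (((N : ℝ) - b) / y) (((d : ℝ) - 1) / x) = ((N : ℝ) - b) / y := by
  have hbd' : (b : ℝ) * x + d * y = m := by exact_mod_cast hbd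
  have hle' : (N : ℝ) * x + y ≤ m := by exact_mod_cast hle
  rw [min_eq_left_iff, div_le_div_iff₀ (Nat.cast_pos.mpr hy) (Nat.cast_pos.mpr hx)]
  linarith

theorem abs_sum_fareyPairs_psi_min_le {N K m : ℕ} (hm : m ≠ 0) (hKN : K ≤ N) (σ : ℤˣ)
    (b d : ℕ → ℕ → ℤ) (hbd : ∀ p ∈ fareyPairs K, b p.1 p.2 * p.1 + d p.1 p.2 * p.2 = m) :
    |∑ p ∈ fareyPairs K, psi (((σ : ℤ) : ℝ) *
        min (((N : ℝ) - b p.1 p.2) / p.2) (((d p.1 p.2 : ℝ) - 1) / p.1))| ≤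
      #m.divisors * (K * (1 + Real.log K)) + K * (K + 1 - m / N : ℕ) := by
  set V : ℕ × ℕ → ℝ := fun p ↦ psi (((σ : ℤ) : ℝ) *
    min (((N : ℝ) - b p.1 p.2) / p.2) (((d p.1 p.2 : ℝ) - 1) / p.1))
  set L : ℕ × ℕ → ℝ := fun p ↦ psi (((σ : ℤ) : ℝ) * N / p.2 + ((-σ : ℤˣ) : ℤ) * b p.1 p.2 / p.2)
  have hL : |∑ p ∈ fareyPairs K, L p| ≤ #m.divisors * (K * (1 + Real.log K)) := by
    refine abs_sum_fareyPairs_psi_linear_le K hm (-σ) (fun y ↦ ((σ : ℤ) : ℝ) * N / y) b ?_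
    intro p hp
    rw [← hbd p hp]
    exact Int.modEq_add_mul_modulus_iff.mpr rfl
  have hdiff (p : ℕ × ℕ) (hp : p ∈ fareyPairs K) :
      |V p - L p| ≤ if m < N * p.1 + p.2 then 1 else 0 := by
    obtain ⟨⟨hx, hy⟩, -⟩ := mem_fareyPairs.mp hp
    split_ifs with hbad
    · exact abs_psi_sub_psi_le_one _ _
    · suffices V p = L p by rw [this, sub_self, abs_zero]
      simp only [V, L]
      rw [min_div_eq_left (mem_Icc.mp hx).1 (mem_Icc.mp hy).1 (hbd p hp) (not_lt.mp hbad)]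
      congr 1
      push_cast
      ring
  have hexceptional : |∑ p ∈ fareyPairs K, (V p - L p)| ≤ K * (K + 1 - m / N : ℕ) := by
    calc |∑ p ∈ fareyPairs K, (V p - L p)|
        ≤ ∑ p ∈ fareyPairs K, if m < N * p.1 + p.2 then (1 : ℝ) else 0 :=
          (abs_sum_le_sum_abs _ _).trans (sum_le_sum hdiff)
      _ = #{p ∈ fareyPairs K | m < N * p.1 + p.2} := sum_boole _ _
      _ ≤ K * (K + 1 - m / N : ℕ) := by exact_mod_cast card_filter_fareyPairs_le hKN m
  calc |∑ p ∈ fareyPairs K, V p|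
      = |∑ p ∈ fareyPairs K, L p + ∑ p ∈ fareyPairs K, (V p - L p)| := by
        rw [← sum_add_distrib]
        simp only [add_sub_cancel]
    _ ≤ #m.divisors * (K * (1 + Real.log K)) + K * (K + 1 - m / N : ℕ) :=
        (abs_add_le _ _).trans (add_le_add hL hexceptional)

/-- The integer `b₀(x, y) ∈ [1, y]` with `b₀ x ≡ m (mod y)`, for coprime `x` and `y > 0`. -/
def congrSolution (m x y : ℕ) : ℤ := (m * Nat.gcdA x y - 1) % y + 1

/-- The integer `d₀(x, y) = (m - b₀(x, y) x) / y`. -/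
def coSolution (m x y : ℕ) : ℤ := (m - congrSolution m x y * x) / y

theorem congrSolution_mem_Icc (m x : ℕ) {y : ℕ} (hy : 0 < y) :
    congrSolution m x y ∈ Icc (1 : ℤ) y := by
  have hy' : (0 : ℤ) < y := by exact_mod_cast hy
  have h₀ := Int.emod_nonneg (m * Nat.gcdA x y - 1) hy'.ne'
  have h₁ := Int.emod_lt_of_pos (m * Nat.gcdA x y - 1) hy'
  rw [congrSolution, mem_Icc]
  omega

theorem congrSolution_mul_modEq (m : ℕ) {x y : ℕ} (h : x.Coprime y) :
    congrSolution m x y * x ≡ m [ZMOD y] := by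
  have hbezout : Nat.gcdA x y * x ≡ 1 [ZMOD y] := by
    have hgcd := Nat.gcd_eq_gcd_ab x y
    rw [h, Nat.cast_one] at hgcd
    rw [hgcd, mul_comm]
    exact Int.modEq_add_modulus_mul_iff.mpr rfl
  have hmod : congrSolution m x y ≡ m * Nat.gcdA x y [ZMOD y] := by
    simpa only [congrSolution, sub_add_cancel] using
      (Int.mod_modEq (m * Nat.gcdA x y - 1) y).add_right 1
  calc congrSolution m x y * x ≡ m * Nat.gcdA x y * x [ZMOD y] := hmod.mul_right _
    _ = m * (Nat.gcdA x y * x) := mul_assoc _ _ _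
    _ ≡ m * 1 [ZMOD y] := hbezout.mul_left _
    _ = m := mul_one _

theorem congrSolution_mul_add_coSolution_mul (m : ℕ) {x y : ℕ} (h : x.Coprime y) :
    congrSolution m x y * x + coSolution m x y * y = m := by
  rw [coSolution, Int.ediv_mul_cancel (congrSolution_mul_modEq m h).dvd, add_sub_cancel]

theorem dvd_mul_sub_iff_eq_congrSolution (m : ℕ) {x y : ℕ} (h : x.Coprime y) {b : ℤ}
    (hb : b ∈ Icc (1 : ℤ) y) : (y : ℤ) ∣ b * x - m ↔ b = congrSolution m x y := by
  have hsol := congrSolution_mul_modEq m h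
  constructor
  · intro hdvd
    have hmod : b * x ≡ congrSolution m x y * x [ZMOD y] :=
      (Int.modEq_iff_dvd.mpr hdvd).symm.trans hsol.symm
    have hb' := mem_Icc.mp hb
    have hsol' := mem_Icc.mp (congrSolution_mem_Icc m x (y := y) (by omega))
    have hdvd' : (y : ℤ) ∣ congrSolution m x y - b := by
      refine (Int.isCoprime_iff_gcd_eq_one.mpr ?_).dvd_of_dvd_mul_right
        (by simpa only [sub_mul] using hmod.dvd)
      exact_mod_cast h.symm
    have := Int.eq_zero_of_abs_lt_dvd hdvd' (by rw [abs_lt]; omega)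
    omega
  · rintro rfl
    exact hsol.symm.dvd

theorem cast_coSolution (m : ℕ) {x y : ℕ} (hy : 0 < y) (h : x.Coprime y) :
    (coSolution m x y : ℝ) = (m - congrSolution m x y * x) / y := by
  rw [eq_div_iff (Nat.cast_ne_zero.mpr hy.ne'), eq_sub_iff_add_eq']
  exact_mod_cast congrSolution_mul_add_coSolution_mul m h

theorem sum_Icc_ite_dvd_eq {R : Type*} [AddCommMonoid R] (m : ℕ) {x y : ℕ} (hy : 0 < y)
    (h : x.Coprime y) (g : ℤ → R) :
    ∑ b ∈ Icc (1 : ℤ) y, (if (y : ℤ) ∣ b * x - m then g b else 0) = g (congrSolution m x y) := by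
  have hmem := congrSolution_mem_Icc m x hy
  rw [sum_eq_single_of_mem _ hmem fun b hb hne ↦
    if_neg (mt (dvd_mul_sub_iff_eq_congrSolution m h hb).mp hne)]
  exact if_pos ((dvd_mul_sub_iff_eq_congrSolution m h hmem).mpr rfl)

theorem fareyPairs_div_eq (N : ℕ) {r : ℕ} (hr : 0 < r) :
    fareyPairs (N / r) = {p ∈ Icc 1 N ×ˢ Icc 1 N |
      p.1 * r ≤ N ∧ p.2 * r ≤ N ∧ N < (p.1 + p.2) * r ∧ Nat.gcd p.1 p.2 = 1} := by
  ext p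
  have hle := Nat.div_le_self N r
  simp only [mem_fareyPairs, mem_filter, mem_product, mem_Icc, ← Nat.le_div_iff_mul_le hr,
    ← Nat.div_lt_iff_lt_mul hr, Nat.Coprime]
  omega

theorem sum_ite_eq_sum_fareyPairs {R : Type*} [AddCommMonoid R] (N m : ℕ) {r : ℕ} (hr : 0 < r)
    (g : ℕ → ℕ → ℝ → ℝ → R) :
    (∑ x ∈ Icc 1 N, ∑ y ∈ Icc 1 N, ∑ b ∈ Icc (1 : ℤ) y,
        if x * r ≤ N ∧ y * r ≤ N ∧ N < (x + y) * r ∧ Nat.gcd x y = 1 ∧ (y : ℤ) ∣ b * x - m then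
          g x y b ((m - b * x) / y) else 0) =
      ∑ p ∈ fareyPairs (N / r), g p.1 p.2 (congrSolution m p.1 p.2) (coSolution m p.1 p.2) := by
  rw [fareyPairs_div_eq N hr, sum_filter, sum_product]
  refine sum_congr rfl fun x _ ↦ sum_congr rfl fun y hy ↦ ?_
  have hy := (mem_Icc.mp hy).1
  split_ifs with hxy
  · simp only [hxy, true_and]
    rw [cast_coSolution m hy hxy.2.2.2]
    exact sum_Icc_ite_dvd_eq m hy hxy.2.2.2 fun b ↦ g x y b ((m - b * x) / y)
  · exact sum_eq_zero fun b _ ↦ if_neg fun h ↦ hxy ⟨h.1, h.2.1, h.2.2.1, h.2.2.2.1⟩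

theorem abs_sum_fareyPairs_psi_V_le {N K m : ℕ} (hm : m ≠ 0) (hKN : K ≤ N) :
    |∑ p ∈ fareyPairs K, psi (min (((N : ℝ) - congrSolution m p.1 p.2) / p.2)
        (((coSolution m p.1 p.2 : ℝ) - 1) / p.1))| ≤
      #m.divisors * (K * (1 + Real.log K)) + K * (K + 1 - m / N : ℕ) := by
  simpa only [Units.val_one, Int.cast_one, one_mul] using
    abs_sum_fareyPairs_psi_min_le hm hKN 1 (congrSolution m) (coSolution m)
      fun p hp ↦ congrSolution_mul_add_coSolution_mul m (mem_fareyPairs.mp hp).2.2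

theorem abs_sum_fareyPairs_psi_U_le {N K m : ℕ} (hm : m ≠ 0) (hKN : K ≤ N) :
    |∑ p ∈ fareyPairs K, psi (max ((1 - (congrSolution m p.1 p.2 : ℝ)) / p.2)
        (((coSolution m p.1 p.2 : ℝ) - N) / p.1))| ≤
      #m.divisors * (K * (1 + Real.log K)) + K * (K + 1 - m / N : ℕ) := by
  have hmax (x y : ℕ) (b d : ℝ) :
      max ((1 - b) / y) ((d - N) / x) = -1 * min ((N - d) / x) ((b - 1) / y) := by
    rw [neg_one_mul, ← max_neg_neg, max_comm, ← neg_div, ← neg_div, neg_sub, neg_sub]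
  have h := abs_sum_fareyPairs_psi_min_le hm hKN (-1) (fun y x ↦ coSolution m x y)
    (fun y x ↦ congrSolution m x y) fun p hp ↦ by
      rw [add_comm]
      exact congrSolution_mul_add_coSolution_mul m (mem_fareyPairs.mp hp).2.2.symm
  rw [sum_fareyPairs_swap K fun x y ↦ psi ((((-1 : ℤˣ) : ℤ) : ℝ) *
    min (((N : ℝ) - coSolution m x y) / x) (((congrSolution m x y : ℝ) - 1) / y))] at h
  simpa only [hmax, Units.val_neg, Units.val_one, Int.cast_neg, Int.cast_one] using h

theorem natCast_div_add_one_sub_div_le {N r : ℕ} (hN : 0 < N) (hr : 0 < r) (m : ℕ) :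
    ((N / r + 1 - m / N : ℕ) : ℝ) ≤ 2 + |(r * m : ℝ) - (N : ℝ) ^ 2| / (r * N) := by
  rcases le_total (N / r + 1) (m / N) with hle | hle
  · rw [Nat.sub_eq_zero_of_le hle, Nat.cast_zero]
    positivity
  have hfloor : (m : ℝ) / N < (m / N : ℕ) + 1 := by
    rw [← Nat.floor_div_eq_div (K := ℝ)]
    exact Nat.lt_floor_add_one _
  calc ((N / r + 1 - m / N : ℕ) : ℝ) = (N / r : ℕ) + 1 - (m / N : ℕ) := by
        rw [Nat.cast_sub hle, Nat.cast_add, Nat.cast_one]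
    _ ≤ 2 + ((N : ℝ) / r - m / N) := by linarith [Nat.cast_div_le (α := ℝ) (m := N) (n := r)]
    _ = 2 + -(r * m - (N : ℝ) ^ 2) / (r * N) := by
        field_simp
        ring
    _ ≤ 2 + |(r * m : ℝ) - (N : ℝ) ^ 2| / (r * N) := by
        gcongr
        exact neg_le_abs _

theorem exists_divisors_log_add_exceptional_le {ε : ℝ} (hε : 0 < ε) :
    ∃ C : ℝ, 0 < C ∧ ∀ N r m : ℕ, 0 < N → 0 < r → m ≤ 2 * N ^ 2 →
      (#m.divisors : ℝ) * ((N / r : ℕ) * (1 + Real.log (N / r : ℕ))) +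
          (N / r : ℕ) * (N / r + 1 - m / N : ℕ) ≤
        C * ((N : ℝ) / r) * ((N : ℝ) ^ ε + |(r * m : ℝ) - (N : ℝ) ^ 2| / (r * N)) := by
  obtain ⟨C, hC, hdivisors⟩ := exists_card_divisors_mul_one_add_log_le hε
  refine ⟨C + 2, by positivity, fun N r m hN hr hm ↦ ?_⟩
  set K := N / r
  set D := |(r * m : ℝ) - (N : ℝ) ^ 2| / (r * N)
  have hD : 0 ≤ D := by positivity
  have hone : 1 ≤ (N : ℝ) ^ ε := Real.one_le_rpow (by exact_mod_cast hN) hε.le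
  have hlog : Real.log K ≤ Real.log N := by
    rcases K.eq_zero_or_pos with hK | hK
    · rw [hK, Nat.cast_zero, Real.log_zero]
      exact Real.log_natCast_nonneg N
    · exact Real.log_le_log (Nat.cast_pos.mpr hK) (Nat.cast_le.mpr (Nat.div_le_self N r))
  calc (#m.divisors : ℝ) * (K * (1 + Real.log K)) + K * (K + 1 - m / N : ℕ)
      ≤ #m.divisors * (K * (1 + Real.log N)) + K * (2 + D) := by
        gcongr
        exact natCast_div_add_one_sub_div_le hN hr m
    _ = K * (#m.divisors * (1 + Real.log N) + (2 + D)) := by ring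
    _ ≤ K * (C * (N : ℝ) ^ ε + (2 * (N : ℝ) ^ ε + 2 * D)) := by
        gcongr ?_ * (?_ + ?_)
        · exact hdivisors N m hN hm
        · linarith
    _ ≤ K * ((C + 2) * ((N : ℝ) ^ ε + D)) := by
        gcongr
        linarith [mul_nonneg hC.le hD]
    _ ≤ (N : ℝ) / r * ((C + 2) * ((N : ℝ) ^ ε + D)) := by
        gcongr
        exact Nat.cast_div_le
    _ = (C + 2) * ((N : ℝ) / r) * ((N : ℝ) ^ ε + D) := by ring

end Development

theorem stmt9 :
    ∀ ε : ℝ, 0 < ε → ∃ C : ℝ, 0 < C ∧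
      ∀ N h r : ℕ, 0 < N → 1 ≤ h → h ≤ 2 * N ^ 2 → 0 < r → r ∣ h → r ≤ N →
        -- sum over coprime positive x ≤ M, y ≤ M with x + y > M (M = N/r as a rational),
        -- the inner sum over b picks out the unique b₀ ∈ [1,y] with y ∣ (b₀·x − m), m = h/r;
        -- d₀ = (m − b₀·x)/y, V = min{(N − b₀)/y, (d₀ − 1)/x}, U = max{(1 − b₀)/y, (d₀ − N)/x}
        |∑ x ∈ Finset.Icc 1 N, ∑ y ∈ Finset.Icc 1 N, ∑ b ∈ Finset.Icc (1 : ℤ) (y : ℤ),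
            if x * r ≤ N ∧ y * r ≤ N ∧ N < (x + y) * r ∧ Nat.gcd x y = 1 ∧
                (y : ℤ) ∣ (b * (x : ℤ) - ((h / r : ℕ) : ℤ)) then
              psi (min (((N : ℝ) - (b : ℝ)) / (y : ℝ))
                (((((h / r : ℕ) : ℝ) - (b : ℝ) * (x : ℝ)) / (y : ℝ) - 1) / (x : ℝ)))
            else 0| ≤
          C * ((N : ℝ) / (r : ℝ)) * ((N : ℝ) ^ ε + |(h : ℝ) - (N : ℝ) ^ 2| / ((r : ℝ) * (N : ℝ)))
        ∧
        |∑ x ∈ Finset.Icc 1 N, ∑ y ∈ Finset.Icc 1 N, ∑ b ∈ Finset.Icc (1 : ℤ) (y : ℤ),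
            if x * r ≤ N ∧ y * r ≤ N ∧ N < (x + y) * r ∧ Nat.gcd x y = 1 ∧
                (y : ℤ) ∣ (b * (x : ℤ) - ((h / r : ℕ) : ℤ)) then
              psi (max ((1 - (b : ℝ)) / (y : ℝ))
                (((((h / r : ℕ) : ℝ) - (b : ℝ) * (x : ℝ)) / (y : ℝ) - (N : ℝ)) / (x : ℝ)))
            else 0| ≤
          C * ((N : ℝ) / (r : ℝ)) * ((N : ℝ) ^ ε + |(h : ℝ) - (N : ℝ) ^ 2| / ((r : ℝ) * (N : ℝ))) := by
  intro ε hε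
  obtain ⟨C, hC, hbound⟩ := exists_divisors_log_add_exceptional_le hε
  refine ⟨C, hC, fun N h r hN hh hhN hr hdvd _ ↦ ?_⟩
  obtain ⟨m, rfl⟩ := hdvd
  have hm : m ≠ 0 := right_ne_zero_of_mul (Nat.one_le_iff_ne_zero.mp hh)
  have hmN : m ≤ 2 * N ^ 2 := (Nat.le_mul_of_pos_left m hr).trans hhN
  rw [Nat.mul_div_cancel_left m hr, Nat.cast_mul]
  constructor
  · rw [sum_ite_eq_sum_fareyPairs N m hr fun x y b d ↦
      psi (min (((N : ℝ) - b) / y) ((d - 1) / x))]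
    exact (abs_sum_fareyPairs_psi_V_le hm (Nat.div_le_self N r)).trans (hbound N r m hN hr hmN)
  · rw [sum_ite_eq_sum_fareyPairs N m hr fun x y b d ↦
      psi (max ((1 - b) / y) ((d - N) / x))]
    exact (abs_sum_fareyPairs_psi_U_le hm (Nat.div_le_self N r)).trans (hbound N r m hN hr hmN)
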